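/- arXiv:2505.13226 — 6 statements merged into one kernel-verified Lean document; each statement's English description precedes it below -/
import Mathlib

section
/- If a mixed state ρ on H^{A₁}⊗⋯⊗H^{Aₙ} is k-partitewise separable up to A₁,…,A_k (2 ≤ k < n), then its reduced state ρ^{A₁⋯A_k} = tr_{A_{k+1}⋯A_n} ρ is fully separable, i.e., it is a convex combination Σ_m p_m σ_m^{A₁}⊗σ_m^{A₂}⊗⋯⊗σ_m^{A_k} of product states of the k parties. -/
/-!
A pure state that factorizes across a partition whose blocks each contain exactly one of the
kept parties has a product reduced state: summing over the remaining parties splits as a product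
of sums, one for each block (`reduce_proj_eq_prod`), and the factor of a block is the Gram matrix
`F Fᴴ` of the block's vector, viewed as a matrix from the traced-out parties of the block to its
single kept party. The product of the traces of these Gram matrices is the trace of the pure
state, namely `1`, so each of them can be normalized to a density matrix
(`exists_product_of_pure`). The partial trace is linear, so the mixed case follows termwise.
-/

open scoped ComplexOrder

noncomputable section

namespace PW

/-- The projector `|ψ⟩⟨ψ|` of a (not necessarily normalized) vector. -/
def proj {α : Type*} (ψ : α → ℂ) : Matrix α α ℂ :=
  Matrix.of fun x x' => ψ x * (starRingEnd ℂ) (ψ x')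

/-- A density matrix: positive semidefinite with unit trace. -/
def IsDensityM {α : Type*} [Fintype α] (ρ : Matrix α α ℂ) : Prop :=
  ρ.PosSemidef ∧ ρ.trace = 1

/-- Merge coordinates indexed by a predicate `p` and by its complement. -/
def merge {n : ℕ} {ι : Fin n → Type*} (p : Fin n → Prop) [DecidablePred p]
    (x : (i : {i : Fin n // p i}) → ι i.1) (y : (i : {i : Fin n // ¬ p i}) → ι i.1) :
    (i : Fin n) → ι i :=
  fun i => if h : p i then x ⟨i, h⟩ else y ⟨i, h⟩

/-- The reduced state (partial trace over the parties not satisfying `p`). -/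
def reduce {n : ℕ} {ι : Fin n → Type*} [∀ i, Fintype (ι i)] (p : Fin n → Prop)
    [DecidablePred p]
    (ρ : Matrix ((i : Fin n) → ι i) ((i : Fin n) → ι i) ℂ) :
    Matrix ((i : {i : Fin n // p i}) → ι i.1) ((i : {i : Fin n // p i}) → ι i.1) ℂ :=
  Matrix.of fun x x' =>
    ∑ y : (i : {i : Fin n // ¬ p i}) → ι i.1, ρ (merge p x y) (merge p x' y)

/-- The single-party reduced state on the party `i`. -/
def reduce1 {n : ℕ} {ι : Fin n → Type*} [∀ i, Fintype (ι i)] (i : Fin n)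
    (ρ : Matrix ((j : Fin n) → ι j) ((j : Fin n) → ι j) ℂ) : Matrix (ι i) (ι i) ℂ :=
  Matrix.of fun a a' =>
    ∑ y : (j : {j : Fin n // j ≠ i}) → ι j.1,
      ρ (fun j => if h : j = i then cast (congrArg ι h.symm) a else y ⟨j, h⟩)
        (fun j => if h : j = i then cast (congrArg ι h.symm) a' else y ⟨j, h⟩)

/-- A pure state is a product across the partition whose blocks are the fibers of
`P : Fin n → Fin k` (the block of party `i` is `P i`). -/
def IsProductAcross {n k : ℕ} {ι : Fin n → Type*} (P : Fin n → Fin k)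
    (ψ : ((i : Fin n) → ι i) → ℂ) : Prop :=
  ∃ φ : (b : Fin k) → (((i : {i : Fin n // P i = b}) → ι i.1) → ℂ),
    ∀ x, ψ x = ∏ b : Fin k, φ b (fun i => x i.1)

/-- A pure state is `k`-partitewise separable up to the parties `a 0, …, a (k-1)`:
it is a product across some partition into `k` blocks with `a j` in the `j`-th block. -/
def PWSeparablePure {n k : ℕ} {ι : Fin n → Type*} (a : Fin k → Fin n)
    (ψ : ((i : Fin n) → ι i) → ℂ) : Prop :=
  ∃ P : Fin n → Fin k, (∀ j, P (a j) = j) ∧ IsProductAcross P ψ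

/-- A mixed state is `k`-partitewise separable up to `a 0, …, a (k-1)` if it is a convex
combination of `k`-partitewise separable pure states. -/
def PWSeparableMixed {n k : ℕ} {ι : Fin n → Type*} [∀ i, Fintype (ι i)] (a : Fin k → Fin n)
    (ρ : Matrix ((i : Fin n) → ι i) ((i : Fin n) → ι i) ℂ) : Prop :=
  ∃ (m : ℕ) (p : Fin m → ℝ) (ψ : Fin m → ((i : Fin n) → ι i) → ℂ),
    (∀ t, 0 ≤ p t) ∧ (∑ t, p t = 1) ∧
    (∀ t, (proj (ψ t)).trace = 1) ∧
    (∀ t, PWSeparablePure a (ψ t)) ∧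
    ρ = ∑ t, (p t : ℂ) • proj (ψ t)

end PW

open PW

namespace PW

section Pure

variable {n : ℕ} {ι : Fin n → Type*} {p : Fin n → Prop} [DecidablePred p]

/-- Assemble the coordinates of the block of the kept party `b` from the coordinate `a` at `b`
and the coordinates `y` at the other parties of the block; `Q` sends each party to the kept
party of its block. -/
def blockMerge (Q : Fin n → {i : Fin n // p i}) (hQ : ∀ b, Q b.1 = b) (b : {i : Fin n // p i})
    (a : ι b.1) (y : (i : {i : {i : Fin n // ¬ p i} // Q i.1 = b}) → ι i.1.1) :
    (i : {i : Fin n // Q i = b}) → ι i.1 :=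
  fun i => if h : p i.1 then
      cast (congrArg (fun c : {i : Fin n // p i} => ι c.1) (i.2.symm.trans (hQ ⟨i.1, h⟩))) a
    else y ⟨⟨i.1, h⟩, i.2⟩

lemma blockMerge_restrict (Q : Fin n → {i : Fin n // p i}) (hQ : ∀ b, Q b.1 = b)
    (b : {i : Fin n // p i}) (x : (i : {i : Fin n // p i}) → ι i.1)
    (y : (i : {i : Fin n // ¬ p i}) → ι i.1) :
    blockMerge Q hQ b (x b) (fun i => y i.1) =
      fun i : {i : Fin n // Q i = b} => merge p x y i.1 := by
  funext ⟨i, hi⟩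
  by_cases h : p i
  · have hb : b = ⟨i, h⟩ := hi.symm.trans (hQ ⟨i, h⟩)
    subst hb
    simp [blockMerge, merge, h]
  · simp [blockMerge, merge, h]

/-- Splitting a family over a type into its restrictions to the fibers of a map. -/
def piFiberEquiv {α β : Type*} (γ : α → Type*) (f : α → β) :
    ((i : α) → γ i) ≃ ((b : β) → (i : {i : α // f i = b}) → γ i.1) where
  toFun y _ i := y i.1
  invFun z i := z (f i) ⟨i, rfl⟩
  left_inv _ := rfl
  right_inv z := by
    funext b ⟨i, hi⟩
    subst hi
    rfl

variable [∀ i, Fintype (ι i)]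

/-- The vector of the block of `b`, as a matrix from the traced-out parties of the block to
the kept party `b`. -/
def blockMatrix (Q : Fin n → {i : Fin n // p i}) (hQ : ∀ b, Q b.1 = b)
    (Φ : (b : {i : Fin n // p i}) → ((i : {i : Fin n // Q i = b}) → ι i.1) → ℂ)
    (b : {i : Fin n // p i}) :
    Matrix (ι b.1) ((i : {i : {i : Fin n // ¬ p i} // Q i.1 = b}) → ι i.1.1) ℂ :=
  Matrix.of fun a y => Φ b (blockMerge Q hQ b a y)

lemma reduce_proj_eq_prod (Q : Fin n → {i : Fin n // p i}) (hQ : ∀ b, Q b.1 = b)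
    (Φ : (b : {i : Fin n // p i}) → ((i : {i : Fin n // Q i = b}) → ι i.1) → ℂ)
    (ψ : ((i : Fin n) → ι i) → ℂ) (hψ : ∀ x, ψ x = ∏ b, Φ b (fun i => x i.1))
    (x x' : (i : {i : Fin n // p i}) → ι i.1) :
    reduce p (proj ψ) x x' =
      ∏ b, (blockMatrix Q hQ Φ b * (blockMatrix Q hQ Φ b).conjTranspose) (x b) (x' b) := by
  simp only [reduce, proj, Matrix.of_apply, Matrix.mul_apply, Matrix.conjTranspose_apply,
    blockMatrix]
  rw [Finset.prod_univ_sum, Fintype.piFinset_univ]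
  refine Fintype.sum_equiv
    (piFiberEquiv (fun i : {i : Fin n // ¬ p i} => ι i.1) (fun i => Q i.1)) _ _ fun y => ?_
  rw [hψ, hψ, map_prod, ← Finset.prod_mul_distrib]
  refine Finset.prod_congr rfl fun b _ => ?_
  rw [← blockMerge_restrict Q hQ b x y, ← blockMerge_restrict Q hQ b x' y]
  rfl

lemma trace_reduce (ρ : Matrix ((i : Fin n) → ι i) ((i : Fin n) → ι i) ℂ) :
    (reduce p ρ).trace = ρ.trace := by
  simp only [Matrix.trace, Matrix.diag_apply, reduce, Matrix.of_apply]
  rw [← Fintype.sum_prod_type'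
    (f := fun (x : (i : {i : Fin n // p i}) → ι i.1) (y : (i : {i : Fin n // ¬ p i}) → ι i.1) =>
      ρ (merge p x y) (merge p x y))]
  exact Fintype.sum_equiv (Equiv.piEquivPiSubtypeProd p ι).symm _ _ fun _ => rfl

/-- The reduced state of a normalized pure state on a transversal of the partition across which
it factorizes is a product of density matrices. -/
lemma exists_product_of_pure (Q : Fin n → {i : Fin n // p i}) (hQ : ∀ b, Q b.1 = b)
    (Φ : (b : {i : Fin n // p i}) → ((i : {i : Fin n // Q i = b}) → ι i.1) → ℂ)
    (ψ : ((i : Fin n) → ι i) → ℂ) (hψ : ∀ x, ψ x = ∏ b, Φ b (fun i => x i.1))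
    (htr : (proj ψ).trace = 1) :
    ∃ σ : (b : {i : Fin n // p i}) → Matrix (ι b.1) (ι b.1) ℂ, (∀ b, IsDensityM (σ b)) ∧
      ∀ x x', reduce p (proj ψ) x x' = ∏ b, σ b (x b) (x' b) := by
  set τ : (b : {i : Fin n // p i}) → Matrix (ι b.1) (ι b.1) ℂ :=
    fun b => blockMatrix Q hQ Φ b * (blockMatrix Q hQ Φ b).conjTranspose with hτ
  have hred : ∀ x x', reduce p (proj ψ) x x' = ∏ b, τ b (x b) (x' b) :=
    reduce_proj_eq_prod Q hQ Φ ψ hψ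
  have hpsd : ∀ b, (τ b).PosSemidef := fun b => Matrix.posSemidef_self_mul_conjTranspose _
  have hprod : ∏ b, (τ b).trace = 1 := by
    rw [← htr, ← trace_reduce (p := p)]
    simp only [Matrix.trace, Matrix.diag_apply, hred]
    rw [Finset.prod_univ_sum, Fintype.piFinset_univ]
  have hne : ∀ b, (τ b).trace ≠ 0 := fun b hb => by
    rw [Finset.prod_eq_zero (Finset.mem_univ b) hb] at hprod
    exact zero_ne_one hprod
  refine ⟨fun b => (τ b).trace⁻¹ • τ b, fun b => ⟨?_, ?_⟩, fun x x' => ?_⟩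
  · exact (hpsd b).smul (inv_nonneg.mpr (hpsd b).trace_nonneg)
  · rw [Matrix.trace_smul, smul_eq_mul, inv_mul_cancel₀ (hne b)]
  · simp only [Matrix.smul_apply, smul_eq_mul]
    rw [Finset.prod_mul_distrib, Finset.prod_inv_distrib, hprod, inv_one, one_mul, hred]

end Pure

end PW

/-- If a mixed state `ρ` on `H^{A₁} ⊗ ⋯ ⊗ H^{Aₙ}` is `k`-partitewise
separable up to `A₁, …, A_k` (`2 ≤ k < n`), then its reduced state on `A₁⋯A_k` is fully
separable: it is a convex combination of product states `σ^{A₁} ⊗ ⋯ ⊗ σ^{A_k}`. -/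
theorem statement1 {n k : ℕ} (hk : 2 ≤ k) (hkn : k < n) {ι : Fin n → Type*}
    [∀ i, Fintype (ι i)]
    (ρ : Matrix ((i : Fin n) → ι i) ((i : Fin n) → ι i) ℂ)
    (hρ : IsDensityM ρ)
    (hsep : PWSeparableMixed (fun j : Fin k => Fin.castLE hkn.le j) ρ) :
    ∃ (m : ℕ) (p : Fin m → ℝ)
      (σ : Fin m → (i : {i : Fin n // (i : ℕ) < k}) → Matrix (ι i.1) (ι i.1) ℂ),
      (∀ t, 0 ≤ p t) ∧ (∑ t, p t = 1) ∧
      (∀ t i, IsDensityM (σ t i)) ∧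
      ∀ x x' : (i : {i : Fin n // (i : ℕ) < k}) → ι i.1,
        reduce (fun i => (i : ℕ) < k) ρ x x' =
          ∑ t, (p t : ℂ) * ∏ i : {i : Fin n // (i : ℕ) < k}, σ t i (x i) (x' i) := by
  obtain ⟨m, p, ψ, hp, hsum, htr, hpure, rfl⟩ := hsep
  have key : ∀ t, ∃ σ : (b : {i : Fin n // (i : ℕ) < k}) → Matrix (ι b.1) (ι b.1) ℂ,
      (∀ b, IsDensityM (σ b)) ∧
      ∀ x x', reduce (fun i => (i : ℕ) < k) (proj (ψ t)) x x' = ∏ b, σ b (x b) (x' b) := by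
    intro t
    obtain ⟨P, hP, φ, hφ⟩ := hpure t
    -- Blocks are relabelled by the kept party they contain instead of by `Fin k`.
    let e : Fin k ≃ {i : Fin n // (i : ℕ) < k} :=
      { toFun := fun j => ⟨Fin.castLE hkn.le j, j.2⟩
        invFun := fun i => ⟨i.1.1, i.2⟩
        left_inv := fun _ => rfl
        right_inv := fun _ => rfl }
    refine exists_product_of_pure (fun i => e (P i))
      (fun b => (congrArg e (hP (e.symm b))).trans (e.apply_symm_apply b))
      (fun b z => φ (e.symm b) fun i => z ⟨i.1, (congrArg e i.2).trans (e.apply_symm_apply b)⟩)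
      (ψ t) (fun x => ?_) (htr t)
    rw [hφ]
    exact Fintype.prod_equiv e _ _ fun _ => rfl
  choose σ hσ hred using key
  refine ⟨m, p, σ, hp, hsum, hσ, fun x x' => ?_⟩
  simp only [← hred]
  simp only [reduce, Matrix.of_apply, Matrix.sum_apply, Matrix.smul_apply, smul_eq_mul,
    Finset.mul_sum]
  exact Finset.sum_comm
end
end

section
/- There exists a tripartite pure state |ψ⟩ ∈ H^A⊗H^B⊗H^C with dim H^A = dim H^C = 2 and dim H^B = 4 (for instance |ψ⟩ = |Φ⁺⟩^{AB₁}⊗|Φ⁺⟩^{B₂C} with H^B = ℂ²⊗ℂ² and |Φ⁺⟩ = (|00⟩+|11⟩)/√2) such that the reduced state on AC is a product state, ρ^{AC} = ρ^A⊗ρ^C, yet |ψ⟩ is not 2-partitewise separable up to A, C: there are no vectors giving |ψ⟩ = |φ⟩^A⊗|φ⟩^{BC} and none giving |ψ⟩ = |φ⟩^{AB}⊗|φ⟩^C. Hence a product reduced state does not imply partitewise separability. -/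
/-!
The witness is two Bell pairs, `A` with `B₁` and `B₂` with `C`: its amplitude is `1 / 2` when
`a = b₁` and `b₂ = c`, and zero otherwise. The reduced states on `A` and `C` are both `I / 2`
and the one on `AC` is `I / 4`, their product. The vector itself has Schmidt rank `2` across
each of the cuts `A | BC` and `AB | C`, which a nonvanishing `2 × 2` minor detects.
-/

noncomputable section

namespace PW3

/-- Reduced state of a tripartite pure vector on `A`. -/
def rA {A B C : Type*} [Fintype B] [Fintype C] (ψ : A × B × C → ℂ) : Matrix A A ℂ :=
  Matrix.of fun a a' => ∑ b : B, ∑ c : C, ψ (a, b, c) * (starRingEnd ℂ) (ψ (a', b, c))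

/-- Reduced state of a tripartite pure vector on `C`. -/
def rC {A B C : Type*} [Fintype A] [Fintype B] (ψ : A × B × C → ℂ) : Matrix C C ℂ :=
  Matrix.of fun c c' => ∑ a : A, ∑ b : B, ψ (a, b, c) * (starRingEnd ℂ) (ψ (a, b, c'))

/-- Reduced state of a tripartite pure vector on `AC`. -/
def rAC {A B C : Type*} [Fintype B] (ψ : A × B × C → ℂ) : Matrix (A × C) (A × C) ℂ :=
  Matrix.of fun p p' => ∑ b : B, ψ (p.1, b, p.2) * (starRingEnd ℂ) (ψ (p'.1, b, p'.2))

end PW3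

open PW3

/-- There is a tripartite pure state `|ψ⟩ ∈ H^A ⊗ H^B ⊗ H^C` with
`dim H^A = dim H^C = 2` and `H^B = ℂ² ⊗ ℂ²` (dimension 4) whose reduced state on `AC`
is the product `ρ^A ⊗ ρ^C`, yet `|ψ⟩` is not 2-partitewise separable up to `A, C`:
it is neither of the form `|φ⟩^A ⊗ |φ⟩^{BC}` nor of the form `|φ⟩^{AB} ⊗ |φ⟩^C`.
Hence a product reduced state does not imply partitewise separability. -/
theorem statement3 :
    ∃ ψ : Fin 2 × (Fin 2 × Fin 2) × Fin 2 → ℂ,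
      (∑ p, Complex.normSq (ψ p) = 1) ∧
      (∀ (a a' : Fin 2) (c c' : Fin 2),
        rAC ψ (a, c) (a', c') = rA ψ a a' * rC ψ c c') ∧
      ¬ (∃ (f : Fin 2 → ℂ) (g : (Fin 2 × Fin 2) × Fin 2 → ℂ),
          ∀ a b c, ψ (a, b, c) = f a * g (b, c)) ∧
      ¬ (∃ (f : Fin 2 × (Fin 2 × Fin 2) → ℂ) (g : Fin 2 → ℂ),
          ∀ a b c, ψ (a, b, c) = f (a, b) * g c) := by
  refine ⟨fun p => if p.1 = p.2.1.1 ∧ p.2.1.2 = p.2.2 then 1 / 2 else 0, ?_, ?_, ?_, ?_⟩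
  · simp [Fintype.sum_prod_type, Fin.sum_univ_two]
    norm_num
  · intro a a' c c'
    have h2 : (starRingEnd ℂ) 2 = 2 := Complex.conj_ofNat 2
    fin_cases a <;> fin_cases a' <;> fin_cases c <;> fin_cases c' <;>
      simp [rA, rC, rAC, h2, Fintype.sum_prod_type, Fin.sum_univ_two] <;> norm_num
  · rintro ⟨f, g, h⟩
    -- The `2 × 2` minor with rows `a = 0, 1` and columns `b₁ = 0, 1` at `b₂ = c = 0`
    -- is nonzero, while it vanishes for a product across `A | BC`.
    have h00 := h 0 (0, 0) 0
    have h11 := h 1 (1, 0) 0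
    have h01 := h 0 (1, 0) 0
    simp at h00 h11 h01
    rcases h01 with h0 | h0 <;> simp [h0] at h00 h11
  · rintro ⟨f, g, h⟩
    -- The analogous minor in `b₂` and `c`, at `a = b₁ = 0`, excludes a product across `AB | C`.
    have h00 := h 0 (0, 0) 0
    have h11 := h 0 (0, 1) 1
    have h01 := h 0 (0, 0) 1
    simp at h00 h11 h01
    rcases h01 with h0 | h0 <;> simp [h0] at h00 h11
end
end

section
/- Let ρ be a density matrix on H^{A₁}⊗⋯⊗H^{A_k} (k ≥ 2) such that for every nonempty subset S ⊆ {A₁,…,A_k} the reduced state ρ^S has rank ≥ 2 (in particular ρ itself is mixed). Then the canonical purification |Φ⟩ = Σ_{j=1}^r √q_j |ψ_j⟩⊗|j⟩ ∈ H^{A₁}⊗⋯⊗H^{A_k}⊗ℂ^r of ρ is genuinely entangled as a (k+1)-partite pure state of the parties A₁,…,A_k,C: for every bipartition of {A₁,…,A_k,C} into two nonempty groups, |Φ⟩ is not a product vector across that bipartition. Consequently, every mixed state without pure reduced states is genuinely k-partitewise entanglement extendable, and such a genuine extension is given by its purification. -/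
/-!
If `Φ` were a product vector `f ⊗ g` across `S ∪ {C} | Sᶜ`, then, since `ρ` is the partial trace
of `|Φ⟩⟨Φ|` over `C`, tracing out `S` as well would leave `ρ^{Sᶜ} = ‖f‖² |g⟩⟨g|`. This has rank at
most one (`Matrix.rank_vecMulVec_le`), whereas `Sᶜ` is nonempty and so `ρ^{Sᶜ}` has rank at
least two.
-/

open scoped ComplexOrder

noncomputable section

open PW

/-- Let `ρ` be a density matrix on `H^{A₁} ⊗ ⋯ ⊗ H^{A_k}` (`k ≥ 2`)
all of whose reduced states on nonempty subsets of parties have rank at least 2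
(in particular `ρ` itself is mixed).  Then the canonical purification
`|Φ⟩ = ∑ⱼ √qⱼ |ψⱼ⟩ ⊗ |j⟩` of `ρ` is genuinely entangled as a `(k+1)`-partite pure
state of the parties `A₁, …, A_k, C`: for every bipartition of the `k+1` parties
(determined by the set `S` of the `Aᵢ`'s lying on the same side as the purifying
party `C`, whose other side `Sᶜ` must be nonempty, i.e. `S ≠ univ`), `|Φ⟩` is not a
product vector across that bipartition. -/
theorem statement6 {k : ℕ} (hk : 2 ≤ k) {ι : Fin k → Type*} [∀ i, Fintype (ι i)]
    (ρ : Matrix ((i : Fin k) → ι i) ((i : Fin k) → ι i) ℂ)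
    (hρ : IsDensityM ρ)
    (hrank : ∀ S : Finset (Fin k), S.Nonempty → 2 ≤ (reduce (fun i => i ∈ S) ρ).rank)
    (r : ℕ) (hr : r = ρ.rank)
    (q : Fin r → ℝ) (hq : ∀ j, 0 < q j)
    (ψ : Fin r → ((i : Fin k) → ι i) → ℂ)
    (horth : ∀ j m, (∑ x, (starRingEnd ℂ) (ψ j x) * ψ m x) = if j = m then 1 else 0)
    (hspec : ρ = ∑ j, (q j : ℂ) • proj (ψ j))
    (Φ : (((i : Fin k) → ι i) × Fin r) → ℂ)
    (hΦ : ∀ x j, Φ (x, j) = (Real.sqrt (q j) : ℂ) * ψ j x) :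
    ∀ S : Finset (Fin k), S ≠ Finset.univ →
      ¬ ∃ (f : (((i : {i : Fin k // i ∈ S}) → ι i.1) × Fin r) → ℂ)
          (g : ((i : {i : Fin k // i ∉ S}) → ι i.1) → ℂ),
        ∀ (x : (i : Fin k) → ι i) (j : Fin r),
          Φ (x, j) = f ((fun i => x i.1), j) * g (fun i => x i.1) := by
  intro S hS ⟨f, g, hfg⟩
  have hT : Sᶜ.Nonempty := by
    rwa [Finset.nonempty_iff_ne_empty, Ne, Finset.compl_eq_empty_iff]
  have h2 := hrank Sᶜ hT
  have hpur : ∀ z z', ρ z z' = ∑ j, Φ (z, j) * (starRingEnd ℂ) (Φ (z', j)) := by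
    intro z z'
    rw [hspec, Matrix.sum_apply]
    refine Finset.sum_congr rfl fun j _ => ?_
    have hs : ((Real.sqrt (q j) : ℝ) : ℂ) * (Real.sqrt (q j) : ℝ) = (q j : ℂ) := by
      rw [← Complex.ofReal_mul, Real.mul_self_sqrt (hq j).le]
    simp only [hΦ, Matrix.smul_apply, proj, Matrix.of_apply, smul_eq_mul, map_mul,
      Complex.conj_ofReal]
    rw [← hs]
    ring
  -- `u` is `g` read on the configurations of `Sᶜ`, and `F` is `f` read on those of the
  -- parties outside `Sᶜ`.
  let u : ((i : {i : Fin k // i ∈ Sᶜ}) → ι i.1) → ℂ :=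
    fun x => g fun i : {i : Fin k // i ∉ S} => x ⟨i.1, Finset.mem_compl.2 i.2⟩
  let F : ((i : {i : Fin k // ¬ i ∈ Sᶜ}) → ι i.1) → Fin r → ℂ :=
    fun y j => f (fun i : {i : Fin k // i ∈ S} => y ⟨i.1, fun h => Finset.mem_compl.1 h i.2⟩, j)
  have hm : ∀ x y j, Φ (merge (fun i => i ∈ Sᶜ) x y, j) = F y j * u x := by
    intro x y j
    have h1 : (fun i : {i : Fin k // i ∈ S} => merge (fun i => i ∈ Sᶜ) x y i.1) =
        fun i : {i : Fin k // i ∈ S} => y ⟨i.1, fun h => Finset.mem_compl.1 h i.2⟩ := by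
      funext i
      exact dif_neg fun h => Finset.mem_compl.1 h i.2
    have h2 : (fun i : {i : Fin k // i ∉ S} => merge (fun i => i ∈ Sᶜ) x y i.1) =
        fun i : {i : Fin k // i ∉ S} => x ⟨i.1, Finset.mem_compl.2 i.2⟩ := by
      funext i
      exact dif_pos (Finset.mem_compl.2 i.2)
    rw [hfg, h1, h2]
  have hred : reduce (fun i => i ∈ Sᶜ) ρ = Matrix.vecMulVec
      (fun x => (∑ y, ∑ j, F y j * (starRingEnd ℂ) (F y j)) * u x)
      (fun x' => (starRingEnd ℂ) (u x')) := by
    ext x x'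
    simp only [reduce, Matrix.of_apply, Matrix.vecMulVec_apply, hpur, hm, map_mul,
      Finset.sum_mul]
    refine Finset.sum_congr rfl fun y _ => Finset.sum_congr rfl fun j _ => ?_
    ring
  rw [hred] at h2
  exact absurd (h2.trans (Matrix.rank_vecMulVec_le _ _)) (by norm_num)
end
end

section
/- Let ρ be a mixed density matrix (rank ≥ 2) on H^{A₁}⊗⋯⊗H^{A_k} (k ≥ 2) such that at least two of its single-party marginals ρ^{A_i}, ρ^{A_j} (i ≠ j) have rank ≥ 2. Then the canonical purification |Φ⟩ = Σ_{m=1}^r √q_m |ψ_m⟩⊗|m⟩ ∈ H^{A₁}⊗⋯⊗H^{A_k}⊗ℂ^r is a k-partitewise entanglement extension of ρ: (i) tr_C |Φ⟩⟨Φ| = ρ; (ii) |Φ⟩⟨Φ| ≠ ρ ⊗ τ for any state τ on ℂ^r; and (iii) |Φ⟩, regarded as a (k+1)-partite pure state of A₁,…,A_k,C, cannot be written (after reordering tensor factors) as a product |φ^{X₁}⟩⊗⋯⊗|φ^{X_k}⟩ over any partition X₁,…,X_k of the k+1 parties with A_i ∈ X_i for each i; i.e., |Φ⟩ is k-partitewise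 entangled up to A₁,…,A_k. -/
/-!
The extension `Φ` of `ρ` purifies it because `√qₘ ^ 2 = qₘ`. The two impossibility claims both
come from matrices of the form `u uᴴ` up to a scalar, which have rank at most one.

* If `|Φ⟩⟨Φ| = ρ ⊗ τ` with `tr τ = 1`, then `τ m m ≠ 0` for some `m`, and the diagonal block at `m`
  exhibits `ρ` as a multiple of a projector, contradicting `2 ≤ rank ρ`.
* If `Φ` is a product in which `C` is grouped with `A_m`, then every other party `A_l` carries a
  factor of its own, so its marginal is a multiple of `|φ_l⟩⟨φ_l|` (`rank_reduce1_le_one`). Two of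
  the marginals have rank at least two, and at most one of the two parties is `A_m`.
-/

open scoped ComplexOrder

noncomputable section

open PW

/-- The vector of local labels with `a` at party `i` and `y` at the other parties, as in the
definition of `reduce1`. -/
def insertAt {k : ℕ} {ι : Fin k → Type*} (i : Fin k) (a : ι i)
    (y : (j : {j : Fin k // j ≠ i}) → ι j.1) : (j : Fin k) → ι j :=
  fun j => if h : j = i then cast (congrArg ι h.symm) a else y ⟨j, h⟩

/-- If `Φ` purifies `ρ` and factors as `g` on party `i` times a function `G` of everything else,
then the marginal of `ρ` on `i` is a multiple of `|g⟩⟨g|`. -/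
lemma rank_reduce1_le_one {k r : ℕ} {ι : Fin k → Type*} [∀ i, Fintype (ι i)]
    (ρ : Matrix ((i : Fin k) → ι i) ((i : Fin k) → ι i) ℂ)
    (Φ : (((i : Fin k) → ι i) × Fin r) → ℂ)
    (hpur : ∀ x x', (∑ m : Fin r, Φ (x, m) * (starRingEnd ℂ) (Φ (x', m))) = ρ x x')
    (i : Fin k) (g : ι i → ℂ) (G : ((j : {j : Fin k // j ≠ i}) → ι j.1) → Fin r → ℂ)
    (hfac : ∀ a y m, Φ (insertAt i a y, m) = g a * G y m) :
    (reduce1 i ρ).rank ≤ 1 := by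
  have h : reduce1 i ρ = Matrix.vecMulVec g
      (fun a' => (starRingEnd ℂ) (g a') * ∑ y, ∑ m, G y m * (starRingEnd ℂ) (G y m)) := by
    ext a a'
    change ∑ y, ρ (insertAt i a y) (insertAt i a' y) = g a * _
    simp only [← hpur, hfac, map_mul, Finset.mul_sum]
    refine Finset.sum_congr rfl fun y _ => Finset.sum_congr rfl fun m _ => ?_
    ring
  rw [h]
  exact Matrix.rank_vecMulVec_le _ _

/-- A product in which party `i` is not grouped with the purifying system splits off the factor
of party `i`. -/
lemma exists_factor_of_ne {k r : ℕ} {ι : Fin k → Type*}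
    (Φ : (((i : Fin k) → ι i) × Fin r) → ℂ)
    (m : Fin k) (f : ι m × Fin r → ℂ) (φ : (i : Fin k) → ι i → ℂ)
    (hprod : ∀ (x : (i : Fin k) → ι i) (j : Fin r),
      Φ (x, j) = f (x m, j) * ∏ i ∈ Finset.univ.erase m, φ i (x i))
    (i : Fin k) (hi : i ≠ m) :
    ∃ G : ((j : {j : Fin k // j ≠ i}) → ι j.1) → Fin r → ℂ,
      ∀ a y j, Φ (insertAt i a y, j) = φ i a * G y j := by
  refine ⟨fun y j => f (y ⟨m, hi.symm⟩, j) *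
    ∏ l ∈ (Finset.univ.erase m).erase i, if h : l = i then 1 else φ l (y ⟨l, h⟩), ?_⟩
  intro a y j
  have hmem : i ∈ Finset.univ.erase m := by simp [hi]
  have hself : insertAt i a y i = a := by simp [insertAt]
  have hother : ∀ l (h : l ≠ i), insertAt i a y l = y ⟨l, h⟩ := fun l h => by simp [insertAt, h]
  have hrest : ∏ l ∈ (Finset.univ.erase m).erase i, φ l (insertAt i a y l) =
      ∏ l ∈ (Finset.univ.erase m).erase i, if h : l = i then 1 else φ l (y ⟨l, h⟩) := by
    refine Finset.prod_congr rfl fun l hl => ?_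
    have hl' : l ≠ i := Finset.ne_of_mem_erase hl
    rw [dif_neg hl', hother l hl']
  rw [hprod, ← Finset.mul_prod_erase _ _ hmem, hself, hother m hi.symm, hrest]
  ring

/-- Let `ρ` be a mixed density matrix (rank ≥ 2) on
`H^{A₁} ⊗ ⋯ ⊗ H^{A_k}` (`k ≥ 2`) at least two of whose single-party marginals have
rank ≥ 2.  Then the canonical purification `|Φ⟩ = ∑ₘ √qₘ |ψₘ⟩ ⊗ |m⟩` is a
`k`-partitewise entanglement extension of `ρ`:
(i) `tr_C |Φ⟩⟨Φ| = ρ`;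
(ii) `|Φ⟩⟨Φ| ≠ ρ ⊗ τ` for every state `τ` on the purifying system;
(iii) `|Φ⟩`, as a `(k+1)`-partite pure state of `A₁, …, A_k, C`, is not a product over
any partition into `k` blocks with `Aᵢ` in the `i`-th block — every such partition has
singleton blocks `{Aᵢ}` except the block `{A_m, C}` containing `C` — i.e. `|Φ⟩` is
`k`-partitewise entangled up to `A₁, …, A_k`. -/
theorem statement8 {k : ℕ} (hk : 2 ≤ k) {ι : Fin k → Type*} [∀ i, Fintype (ι i)]
    (ρ : Matrix ((i : Fin k) → ι i) ((i : Fin k) → ι i) ℂ)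
    (hρ : IsDensityM ρ) (hmixed : 2 ≤ ρ.rank)
    (hmarg : ∃ i j : Fin k, i ≠ j ∧ 2 ≤ (reduce1 i ρ).rank ∧ 2 ≤ (reduce1 j ρ).rank)
    (r : ℕ) (hr : r = ρ.rank)
    (q : Fin r → ℝ) (hq : ∀ m, 0 < q m)
    (ψ : Fin r → ((i : Fin k) → ι i) → ℂ)
    (horth : ∀ m m', (∑ x, (starRingEnd ℂ) (ψ m x) * ψ m' x) = if m = m' then 1 else 0)
    (hspec : ρ = ∑ m, (q m : ℂ) • proj (ψ m))
    (Φ : (((i : Fin k) → ι i) × Fin r) → ℂ)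
    (hΦ : ∀ x m, Φ (x, m) = (Real.sqrt (q m) : ℂ) * ψ m x) :
    (∀ x x', (∑ m : Fin r, Φ (x, m) * (starRingEnd ℂ) (Φ (x', m))) = ρ x x') ∧
    (∀ τ : Matrix (Fin r) (Fin r) ℂ, IsDensityM τ →
      ¬ ∀ (x x' : (i : Fin k) → ι i) (m m' : Fin r),
          proj Φ (x, m) (x', m') = ρ x x' * τ m m') ∧
    ¬ ∃ (m : Fin k) (f : ι m × Fin r → ℂ) (φ : (i : Fin k) → ι i → ℂ),
        ∀ (x : (i : Fin k) → ι i) (j : Fin r),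
          Φ (x, j) = f (x m, j) * ∏ i ∈ Finset.univ.erase m, φ i (x i) := by
  have hpur : ∀ x x', (∑ m : Fin r, Φ (x, m) * (starRingEnd ℂ) (Φ (x', m))) = ρ x x' := by
    intro x x'
    rw [hspec, Matrix.sum_apply]
    refine Finset.sum_congr rfl fun m _ => ?_
    have hs : (Real.sqrt (q m) : ℂ) * (Real.sqrt (q m) : ℂ) = (q m : ℂ) := by
      rw [← Complex.ofReal_mul, Real.mul_self_sqrt (hq m).le]
    simp only [hΦ, map_mul, Complex.conj_ofReal, Matrix.smul_apply, proj, Matrix.of_apply,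
      smul_eq_mul, ← hs]
    ring
  refine ⟨hpur, ?_, ?_⟩
  · intro τ hτ hfac
    obtain ⟨m, hm⟩ : ∃ m, τ m m ≠ 0 := by
      by_contra! h
      have htr := hτ.2
      simp [Matrix.trace, h] at htr
    have hvec : ρ = Matrix.vecMulVec (fun x => Φ (x, m))
        (fun x' => (starRingEnd ℂ) (Φ (x', m)) / τ m m) := by
      ext x x'
      have h := hfac x x' m m
      simp only [proj, Matrix.of_apply] at h
      rw [Matrix.vecMulVec_apply, ← mul_div_assoc, h, mul_div_cancel_right₀ _ hm]
    have hle : ρ.rank ≤ 1 := by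
      rw [hvec]
      exact Matrix.rank_vecMulVec_le _ _
    omega
  · rintro ⟨m, f, φ, hprod⟩
    have hle : ∀ i, i ≠ m → (reduce1 i ρ).rank ≤ 1 := fun i hi => by
      obtain ⟨G, hG⟩ := exists_factor_of_ne Φ m f φ hprod i hi
      exact rank_reduce1_le_one ρ Φ hpur i (φ i) G hG
    obtain ⟨i, j, hij, hi, hj⟩ := hmarg
    by_cases him : i = m
    · have := hle j (fun h => hij (him.trans h.symm))
      omega
    · have := hle i him
      omega
end
end

section
/- Let ρ be a density matrix on H^{A₁}⊗⋯⊗H^{A_k} (k ≥ 2) such that at most one of the single-party marginals ρ^{A₁},…,ρ^{A_k} has rank ≥ 2 (i.e., all but at most one are pure). Then for every finite-dimensional H^E, every extension σ on H^{A₁}⊗⋯⊗H^{A_k}⊗H^E of ρ, regarded as a (k+1)-partite state of A₁,…,A_k,E, is k-partitewise separable up to A₁,…,A_k: it is a convex combination of pure states, each of which is a product over a partition of the k+1 parties into k blocks with each A_i in a distinct block. Hence ρ is not k-partitewise entanglement extendable. -/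
/-!
Write `σ = ∑ t, |v t⟩⟨v t|`. For each party `i`, the columns `a ↦ v t (x with xᵢ := a, e)`, over
all `t`, `x`, `e`, form a matrix `S` with `S Sᴴ = ρ^{Aᵢ}`, since tracing out `E` and the other
parties of `σ` yields `ρ^{Aᵢ}`. Hence `S` has the rank of `ρ^{Aᵢ}`, and if that is at most one, all
columns are multiples of a single vector (`exists_common_slice`). So every `v t` splits off a factor
at party `i`. All parties except one party `m` have this property, and splitting them off one after
the other leaves a vector on `A_m E` (`product_of_slices`). Normalizing the nonzero `v t` gives the
convex combination (`exists_convex_of_sum`).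
-/

open scoped ComplexOrder

noncomputable section

open PW

/-- The columns of a matrix `S` with `rank (S Sᴴ) ≤ 1` are multiples of one vector. -/
theorem exists_common_column {α β : Type*} [Fintype α] [Fintype β] (S : Matrix α β ℂ)
    (h : (S * S.conjTranspose).rank ≤ 1) :
    ∃ u : α → ℂ, ∀ b, ∃ c : ℂ, ∀ a, S a b = c * u a := by
  classical
  rw [Matrix.rank_self_mul_conjTranspose, Matrix.rank, finrank_le_one_iff] at h
  obtain ⟨u, hu⟩ := h
  refine ⟨u.1, fun b => ?_⟩
  obtain ⟨c, hc⟩ := hu ⟨S.mulVecLin (Pi.single b 1), LinearMap.mem_range_self _ _⟩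
  refine ⟨c, fun a => ?_⟩
  have := congrFun (congrArg Subtype.val hc) a
  simpa using this.symm

/-- If an extension of `ρ` is the sum of the projectors of the `v t`, and `ρ` has a marginal of
rank at most one at party `i`, then all slices of all the `v t` in the direction of party `i`
are multiples of one vector. -/
theorem exists_common_slice {k : ℕ} {ι : Fin k → Type*} [∀ i, Fintype (ι i)]
    {E : Type*} [Fintype E] {M : ℕ}
    (ρ : Matrix ((i : Fin k) → ι i) ((i : Fin k) → ι i) ℂ)
    (v : Fin M → ((i : Fin k) → ι i) × E → ℂ)
    (hv : ∀ x x', ∑ e : E, ∑ t, v t (x, e) * (starRingEnd ℂ) (v t (x', e)) = ρ x x')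
    (i : Fin k) (hi : (reduce1 i ρ).rank ≤ 1) :
    ∃ u : ι i → ℂ, ∀ t x e, ∃ c : ℂ, ∀ a, v t (Function.update x i a, e) = c * u a := by
  let S : Matrix (ι i) (((j : {j : Fin k // j ≠ i}) → ι j.1) × E × Fin M) ℂ :=
    Matrix.of fun a q =>
      v q.2.2 (fun j => if h : j = i then cast (congrArg ι h.symm) a else q.1 ⟨j, h⟩, q.2.1)
  have hS : S * S.conjTranspose = reduce1 i ρ := by
    ext a a'
    simp only [Matrix.mul_apply, Matrix.conjTranspose_apply, reduce1, Matrix.of_apply, S,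
      Fintype.sum_prod_type, ← hv]
    rfl
  rw [← hS] at hi
  obtain ⟨u, hu⟩ := exists_common_column S hi
  refine ⟨u, fun t x e => ?_⟩
  obtain ⟨c, hc⟩ := hu (fun j => x j.1, e, t)
  refine ⟨c, fun a => ?_⟩
  rw [← hc a]
  simp only [S, Matrix.of_apply]
  congr 2
  funext j
  by_cases h : j = i
  · subst h
    simp
  · simp [h]

/-- A vector whose slices at each party `i ≠ m` are multiples of one vector `u i` is a product of
a vector on party `m` and `E` and of single-party vectors. -/
theorem product_of_slices {k : ℕ} {ι : Fin k → Type*} {E : Type*} (m : Fin k)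
    (v : ((i : Fin k) → ι i) × E → ℂ) (hv : v ≠ 0) (u : (i : Fin k) → ι i → ℂ)
    (hu : ∀ i, i ≠ m → ∀ x e, ∃ c : ℂ, ∀ a, v (Function.update x i a, e) = c * u i a) :
    ∃ (f : ι m × E → ℂ) (φ : (i : Fin k) → ι i → ℂ),
      ∀ (x : (i : Fin k) → ι i) (e : E),
        v (x, e) = f (x m, e) * ∏ i ∈ Finset.univ.erase m, φ i (x i) := by
  obtain ⟨⟨x₀, e₀⟩, h₀⟩ := Function.ne_iff.mp hv
  -- Each `u i` is rescaled to take the value `1` at the base point `x₀`, where it is nonzero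
  -- because `v` is.
  have key : ∀ i, i ≠ m → ∀ x e,
      v (x, e) = u i (x i) / u i (x₀ i) * v (Function.update x i (x₀ i), e) := by
    intro i hi x e
    have hne : u i (x₀ i) ≠ 0 := by
      intro h
      obtain ⟨c, hc⟩ := hu i hi x₀ e₀
      have := hc (x₀ i)
      rw [Function.update_eq_self, h, mul_zero] at this
      exact h₀ this
    obtain ⟨c, hc⟩ := hu i hi x e
    have h1 := hc (x i)
    rw [Function.update_eq_self] at h1
    rw [h1, hc]
    field_simp
  have main : ∀ s : Finset (Fin k), m ∉ s → ∀ x e,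
      v (x, e) = v (s.piecewise x₀ x, e) * ∏ i ∈ s, u i (x i) / u i (x₀ i) := by
    intro s
    induction s using Finset.induction_on with
    | empty => intro _ x e; simp
    | insert j s hj ih =>
      intro hm x e
      rw [Finset.mem_insert, not_or] at hm
      rw [ih hm.2 x e, key j (Ne.symm hm.1) (s.piecewise x₀ x) e, Finset.prod_insert hj,
        Finset.piecewise_insert, Finset.piecewise_eq_of_notMem _ _ _ hj]
      ring
  refine ⟨fun q => v (Function.update x₀ m q.1, q.2), fun i a => u i a / u i (x₀ i),
    fun x e => ?_⟩
  rw [main _ (Finset.notMem_erase m _) x e]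
  congr 3
  funext j
  by_cases h : j = m
  · subst h
    simp
  · simp [h]

theorem sum_subtype_ne_zero {τ V A : Type*} [Fintype τ] [Zero V] [DecidableEq V]
    [AddCommMonoid A] (v : τ → V) (F : τ → A) (hF : ∀ t, v t = 0 → F t = 0) :
    ∑ s : {t // v t ≠ 0}, F s.1 = ∑ t, F t := by
  rw [← Finset.sum_subtype (Finset.univ.filter fun t => v t ≠ 0) (by simp) F]
  refine Finset.sum_subset (Finset.subset_univ _) fun t _ ht => hF t ?_
  simpa using ht

/-- A trace-one sum of (unnormalized) projectors is a convex combination of projectors of unit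
vectors, each proportional to one of the given nonzero vectors. -/
theorem exists_convex_of_sum {α : Type*} [Fintype α] {N : ℕ} (v : Fin N → α → ℂ)
    (htr : (∑ t, proj (v t)).trace = 1) :
    ∃ (M : ℕ) (p : Fin M → ℝ) (χ : Fin M → α → ℂ),
      (∀ t, 0 ≤ p t) ∧ (∑ t, p t = 1) ∧ (∀ t, (proj (χ t)).trace = 1) ∧
      (∀ t, ∃ (s : Fin N) (c : ℂ), v s ≠ 0 ∧ χ t = c • v s) ∧
      ∑ t, proj (v t) = ∑ t, (p t : ℂ) • proj (χ t) := by
  classical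
  let w : Fin N → ℝ := fun t => ∑ z, ‖v t z‖ ^ 2
  have hw : ∀ t, (proj (v t)).trace = (w t : ℂ) := by
    intro t
    simp [w, proj, Matrix.trace, Complex.mul_conj']
  have hw0 : ∀ t, 0 ≤ w t := fun t => by positivity
  have hwpos : ∀ t, v t ≠ 0 → w t ≠ 0 := by
    intro t ht h
    refine ht (funext fun z => ?_)
    have := (Finset.sum_eq_zero_iff_of_nonneg (fun z _ => by positivity)).mp h z
      (Finset.mem_univ z)
    simpa using this
  have hproj : ∀ (c : ℝ) (t : Fin N), proj ((c : ℂ) • v t) = ((c ^ 2 : ℝ) : ℂ) • proj (v t) := by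
    intro c t
    ext z z'
    simp [proj]
    ring
  have hsq : ∀ t, ((Real.sqrt (w t))⁻¹) ^ 2 = (w t)⁻¹ := by
    intro t
    rw [inv_pow, Real.sq_sqrt (hw0 t)]
  let en := (Fintype.equivFin {t // v t ≠ 0}).symm
  refine ⟨_, fun t => w (en t).1, fun t => (((Real.sqrt (w (en t).1))⁻¹ : ℝ) : ℂ) • v (en t).1,
    fun t => hw0 _, ?_, fun t => ?_, fun t => ⟨(en t).1, _, (en t).2, rfl⟩, ?_⟩
  · rw [en.sum_comp (fun s => w s.1), sum_subtype_ne_zero v w]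
    · rw [Matrix.trace_sum] at htr
      simp only [hw] at htr
      exact_mod_cast htr
    · intro t ht
      simp [w, ht]
  · rw [hproj, Matrix.trace_smul, hw, hsq, smul_eq_mul, ← Complex.ofReal_mul,
      inv_mul_cancel₀ (hwpos _ (en t).2), Complex.ofReal_one]
  · have : ∀ s : {t // v t ≠ 0}, (w s.1 : ℂ) •
        proj ((((Real.sqrt (w s.1))⁻¹ : ℝ) : ℂ) • v s.1) = proj (v s.1) := by
      intro s
      rw [hproj, hsq, smul_smul, ← Complex.ofReal_mul, mul_inv_cancel₀ (hwpos _ s.2),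
        Complex.ofReal_one, one_smul]
    rw [en.sum_comp (fun s => (w s.1 : ℂ) • proj ((((Real.sqrt (w s.1))⁻¹ : ℝ) : ℂ) • v s.1))]
    simp only [this]
    rw [sum_subtype_ne_zero v (fun t => proj (v t))]
    intro t ht
    ext z z'
    simp [proj, ht]

/-- Let `ρ` be a density matrix on `H^{A₁} ⊗ ⋯ ⊗ H^{A_k}` (`k ≥ 2`)
with at most one single-party marginal of rank ≥ 2.  Then every extension `σ` of `ρ`
(on any finite-dimensional `H^E`), regarded as a `(k+1)`-partite state of
`A₁, …, A_k, E`, is `k`-partitewise separable up to `A₁, …, A_k`: it is a convex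
combination of pure states, each a product over a partition of the `k+1` parties into
`k` blocks with each `Aᵢ` in a distinct block (such a partition has singleton blocks
`{Aᵢ}` except the block `{A_m, E}` containing `E`).  Hence `ρ` is not `k`-partitewise
entanglement extendable. -/
theorem statement9 {k : ℕ} (hk : 2 ≤ k) {ι : Fin k → Type*} [∀ i, Fintype (ι i)]
    (ρ : Matrix ((i : Fin k) → ι i) ((i : Fin k) → ι i) ℂ)
    (hρ : IsDensityM ρ)
    (hmarg : ∀ i j : Fin k, i ≠ j →
      ¬ (2 ≤ (reduce1 i ρ).rank ∧ 2 ≤ (reduce1 j ρ).rank)) :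
    ∀ (E : Type) (_ : Fintype E)
      (σ : Matrix (((i : Fin k) → ι i) × E) (((i : Fin k) → ι i) × E) ℂ),
      IsDensityM σ →
      (∀ x x', (∑ e : E, σ (x, e) (x', e)) = ρ x x') →
      ∃ (M : ℕ) (p : Fin M → ℝ) (χ : Fin M → (((i : Fin k) → ι i) × E) → ℂ),
        (∀ t, 0 ≤ p t) ∧ (∑ t, p t = 1) ∧
        (∀ t, (proj (χ t)).trace = 1) ∧
        (∀ t, ∃ (m : Fin k) (f : ι m × E → ℂ) (φ : (i : Fin k) → ι i → ℂ),
          ∀ (x : (i : Fin k) → ι i) (e : E),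
            χ t (x, e) = f (x m, e) * ∏ i ∈ Finset.univ.erase m, φ i (x i)) ∧
        σ = ∑ t, (p t : ℂ) • proj (χ t) := by
  intro E _ σ hσ hext
  obtain ⟨N, v, hv⟩ := Matrix.posSemidef_iff_eq_sum_vecMulVec.mp hσ.1
  have hv' : σ = ∑ t, proj (v t) := hv
  have hmar : ∀ x x', ∑ e : E, ∑ t, v t (x, e) * (starRingEnd ℂ) (v t (x', e)) = ρ x x' := by
    intro x x'
    rw [← hext]
    simp [hv', Matrix.sum_apply, proj]
  obtain ⟨m, hm⟩ : ∃ m : Fin k, ∀ i, i ≠ m → (reduce1 i ρ).rank ≤ 1 := by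
    by_cases h : ∃ m, 2 ≤ (reduce1 m ρ).rank
    · obtain ⟨m, h⟩ := h
      refine ⟨m, fun i hi => ?_⟩
      by_contra hc
      exact hmarg i m hi ⟨by omega, h⟩
    · push Not at h
      exact ⟨⟨0, by omega⟩, fun i _ => by have := h i; omega⟩
  have hu : ∀ i, ∃ u : ι i → ℂ, i ≠ m →
      ∀ t x e, ∃ c : ℂ, ∀ a, v t (Function.update x i a, e) = c * u a := by
    intro i
    by_cases hi : i = m
    · exact ⟨0, fun h => absurd hi h⟩
    · obtain ⟨u, hu⟩ := exists_common_slice ρ v hmar i (hm i hi)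
      exact ⟨u, fun _ => hu⟩
  choose u hu using hu
  obtain ⟨M, p, χ, hp, hp1, hχ, hχv, hsum⟩ := exists_convex_of_sum v (hv' ▸ hσ.2)
  refine ⟨M, p, χ, hp, hp1, hχ, fun t => ?_, hv'.trans hsum⟩
  obtain ⟨s, c, hs, hc⟩ := hχv t
  obtain ⟨f, φ, hf⟩ := product_of_slices m (v s) hs u fun i hi => hu i hi s
  refine ⟨m, fun q => c * f q, φ, fun x e => ?_⟩
  rw [hc, Pi.smul_apply, hf, smul_eq_mul, mul_assoc]
end
end

section
/- For k = 3 the set of genuinely k-partitewise entanglement extensions is strictly smaller than the set of k-partitewise entanglement extensions: there exist a density matrix ρ on ℂ²⊗ℂ²⊗ℂ² (parties A₁, A₂, A₃) and a pure extension |σ⟩ ∈ ℂ²⊗ℂ²⊗ℂ²⊗ℂ² (parties A₁, A₂, A₃, C) with tr_C |σ⟩⟨σ| = ρ and |σ⟩⟨σ| ≠ ρ ⊗ τ for any state τ on C, such that |σ⟩ is 3-partitewise entangled up to A₁, A₂, A₃ (it admits no product decomposition over a partition of the four parties into three blocks with A₁, A₂, A₃ in distinct blocks), yet |σ⟩ is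 not genuinely entangled (it is a product across some bipartition of the four parties). An example is |σ⟩ = |Φ⁺⟩^{A₁A₂} ⊗ |Φ⁺⟩^{A₃C} with |Φ⁺⟩ = (|00⟩+|11⟩)/√2. -/
/-!
The witness is `|Φ⁺⟩^{A₁A₂} ⊗ |Φ⁺⟩^{A₃C}`. By construction it is a product across
`{A₁, A₂}` and `{A₃, C}`. In a partition into three blocks separating `A₁, A₂, A₃`, the
party `C` joins only one block. If it joins `A₃`, then `A₁` and `A₂` are separated; otherwise
`A₃` and `C` are. Either way a Bell pair would have to factor, which
`IsProductAcross.exchange` rules out: exchanging one block's bits between two labels of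
nonzero amplitude would produce two labels of nonzero amplitude, whereas here it breaks the
correlation within a pair (`bellPair_not_product`). The projector is not of the form
`ρ ⊗ τ` because the bit of `C` is correlated with that of `A₃` (`bellPair_ne_tensor`).
-/

open scoped ComplexOrder

noncomputable section

open PW

/-- The vector `|Φ⁺⟩ ⊗ |Φ⁺⟩`, with parties `0, 1` sharing one Bell pair and parties `2, 3`
the other: amplitude `1/2` where the bits agree within each pair, and `0` elsewhere. -/
def bellPair (z : Fin 4 → Fin 2) : ℂ := if z 0 = z 1 ∧ z 2 = z 3 then 1 / 2 else 0

/-- The reduced state of `bellPair` on the first three parties. -/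
def bellReduced : Matrix (Fin 3 → Fin 2) (Fin 3 → Fin 2) ℂ :=
  Matrix.of fun x x' => ∑ c : Fin 2,
    bellPair (Fin.snoc x c) * (starRingEnd ℂ) (bellPair (Fin.snoc x' c))

theorem bellPair_snoc (x : Fin 3 → Fin 2) (c : Fin 2) :
    bellPair (Fin.snoc x c) = if x 0 = x 1 ∧ x 2 = c then 1 / 2 else 0 := rfl

theorem isDensityM_bellReduced : IsDensityM bellReduced := by
  constructor
  · have h : bellReduced = ∑ c : Fin 2, Matrix.vecMulVec
        (fun x : Fin 3 → Fin 2 => bellPair (Fin.snoc x c))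
        (star fun x : Fin 3 → Fin 2 => bellPair (Fin.snoc x c)) := by
      ext x x'
      simp [bellReduced, Matrix.vecMulVec_apply]
    rw [h]
    exact Matrix.posSemidef_sum _ fun c _ => Matrix.posSemidef_vecMulVec_self_star _
  · have h : ∀ x : Fin 3 → Fin 2,
        bellReduced x x = if x 0 = x 1 then 1 / 4 else 0 := by
      intro x
      have h2 : x 2 = 0 ∨ x 2 = 1 := by generalize x 2 = a; revert a; decide
      by_cases h01 : x 0 = x 1 <;> rcases h2 with h2 | h2 <;>
        simp [bellReduced, bellPair_snoc, h01, h2, map_ofNat] <;> norm_num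
    have hc : (Finset.univ.filter fun x : Fin 3 → Fin 2 => x 0 = x 1).card = 4 := by decide
    simp only [Matrix.trace, Matrix.diag_apply, h]
    rw [← Finset.sum_filter, Finset.sum_const, hc]
    norm_num

theorem sum_normSq_bellPair : ∑ z, Complex.normSq (bellPair z) = 1 := by
  have h : ∀ z, Complex.normSq (bellPair z) = if z 0 = z 1 ∧ z 2 = z 3 then 1 / 4 else 0 := by
    intro z
    unfold bellPair
    split_ifs <;> norm_num [Complex.normSq_apply]
  have hc : (Finset.univ.filter
      fun z : Fin 4 → Fin 2 => z 0 = z 1 ∧ z 2 = z 3).card = 4 := by decide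
  simp only [h]
  rw [← Finset.sum_filter, Finset.sum_const, hc]
  norm_num

/-- Exchanging the contents of one block between two basis labels preserves the product of
the two amplitudes of a product vector, since both sides contain the same factors. -/
theorem PW.IsProductAcross.exchange {n k : ℕ} {ι : Fin n → Type*} {P : Fin n → Fin k}
    {ψ : ((i : Fin n) → ι i) → ℂ} (h : IsProductAcross P ψ) (b : Fin k)
    (z w : (i : Fin n) → ι i) :
    ψ z * ψ w = ψ (fun i => if P i = b then z i else w i) *
      ψ (fun i => if P i = b then w i else z i) := by
  obtain ⟨φ, hφ⟩ := h
  simp only [hφ, ← Finset.prod_mul_distrib]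
  refine Finset.prod_congr rfl fun c _ => ?_
  have key : ∀ u v : (i : Fin n) → ι i,
      (fun i : {i : Fin n // P i = c} => if P i.1 = b then u i.1 else v i.1) =
        if c = b then (fun i : {i : Fin n // P i = c} => u i.1)
          else (fun i : {i : Fin n // P i = c} => v i.1) := by
    intro u v
    by_cases hc : c = b
    · subst hc
      funext i
      simp [i.2]
    · funext i
      simp [i.2, hc]
  rw [key z w, key w z]
  by_cases hc : c = b
  · simp [hc]
  · simp only [hc, if_false]
    exact mul_comm _ _

theorem bellPair_not_product (P : Fin 4 → Fin 3) (hP : ∀ j : Fin 3, P j.castSucc = j) :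
    ¬ IsProductAcross (ι := fun _ : Fin 4 => Fin 2) P bellPair := by
  intro h
  have h0 : P 0 = 0 := hP 0
  have h1 : P 1 = 1 := hP 1
  have h2 : P 2 = 2 := hP 2
  by_cases h3 : P 3 = 2
  · -- Parties `0` and `1` are separated: exchange party `0` between `0000` and `1100`.
    have := h.exchange 0 ![0, 0, 0, 0] ![1, 1, 0, 0]
    simp [bellPair, h0, h1, h2, h3] at this
  · -- Parties `2` and `3` are separated: exchange party `2` between `0000` and `0011`.
    have := h.exchange 2 ![0, 0, 0, 0] ![0, 0, 1, 1]
    simp [bellPair, h0, h1, h2, h3] at this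

/-- For a product `ρ ⊗ τ`, the vanishing of the `0001` diagonal entry forces `τ 1 1 = 0`,
which contradicts the nonzero `0011` diagonal entry. -/
theorem bellPair_ne_tensor (τ : Matrix (Fin 2) (Fin 2) ℂ) :
    ¬ ∀ (x x' : Fin 3 → Fin 2) (c c' : Fin 2),
      bellPair (Fin.snoc x c) * (starRingEnd ℂ) (bellPair (Fin.snoc x' c')) =
        bellReduced x x' * τ c c' := by
  intro h
  have h1 := h ![0, 0, 0] ![0, 0, 0] 1 1
  have h2 := h ![0, 0, 1] ![0, 0, 1] 1 1
  simp only [bellReduced, bellPair_snoc, Matrix.of_apply] at h1 h2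
  simp at h1
  simp [h1] at h2

/-- For `k = 3` the genuinely `k`-partitewise entanglement
extensions form a strictly smaller class than the `k`-partitewise entanglement
extensions: there are a density matrix `ρ` on `ℂ²⊗ℂ²⊗ℂ²` (parties `A₁, A₂, A₃`) and a
pure extension `|σ⟩` on four qubits (parties `A₁, A₂, A₃, C`) with `tr_C |σ⟩⟨σ| = ρ`
and `|σ⟩⟨σ| ≠ ρ ⊗ τ` for every state `τ` on `C`, such that `|σ⟩` is 3-partitewise
entangled up to `A₁, A₂, A₃` (no product decomposition over a partition of the four
parties into three blocks with the `Aᵢ` in distinct blocks), yet `|σ⟩` is not genuinely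
entangled: it is a product across some bipartition of the four parties.
(An example is `|σ⟩ = |Φ⁺⟩^{A₁A₂} ⊗ |Φ⁺⟩^{A₃C}`.) -/
theorem statement15 :
    ∃ (ρ : Matrix (Fin 3 → Fin 2) (Fin 3 → Fin 2) ℂ) (σv : (Fin 4 → Fin 2) → ℂ),
      IsDensityM ρ ∧
      (∑ z, Complex.normSq (σv z)) = 1 ∧
      (∀ x x' : Fin 3 → Fin 2,
        (∑ c : Fin 2, σv (Fin.snoc x c) * (starRingEnd ℂ) (σv (Fin.snoc x' c))) =
          ρ x x') ∧
      (∀ τ : Matrix (Fin 2) (Fin 2) ℂ, IsDensityM τ →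
        ¬ ∀ (x x' : Fin 3 → Fin 2) (c c' : Fin 2),
            σv (Fin.snoc x c) * (starRingEnd ℂ) (σv (Fin.snoc x' c')) =
              ρ x x' * τ c c') ∧
      ¬ (∃ P : Fin 4 → Fin 3, (∀ j : Fin 3, P j.castSucc = j) ∧
          IsProductAcross (ι := fun _ : Fin 4 => Fin 2) P σv) ∧
      (∃ T : Finset (Fin 4), T.Nonempty ∧ T ≠ Finset.univ ∧
        ∃ (f : ((i : {i : Fin 4 // i ∈ T}) → Fin 2) → ℂ)
          (g : ((i : {i : Fin 4 // i ∉ T}) → Fin 2) → ℂ),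
          ∀ z : Fin 4 → Fin 2, σv z = f (fun i => z i.1) * g (fun i => z i.1)) := by
  refine ⟨bellReduced, bellPair, isDensityM_bellReduced, sum_normSq_bellPair,
    fun _ _ => rfl, fun τ _ => bellPair_ne_tensor τ,
    fun ⟨P, hP, h⟩ => bellPair_not_product P hP h, {0, 1}, by simp, by decide, ?_⟩
  refine ⟨fun u => if u ⟨0, by decide⟩ = u ⟨1, by decide⟩ then 1 / 2 else 0,
    fun v => if v ⟨2, by decide⟩ = v ⟨3, by decide⟩ then 1 else 0, fun z => ?_⟩
  unfold bellPair
  by_cases h1 : z 0 = z 1 <;> by_cases h2 : z 2 = z 3 <;> simp [h1, h2]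
end
end
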